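/- Let V be an n-dimensional vector space over ℝ, let T be an invertible linear endomorphism of V, and let 1 ≤ d ≤ n. Then: (i) for every d-dimensional T-invariant subspace W of V, the wedge product of any basis of W is a totally decomposable eigenvector of ⋀^d T; (ii) for every totally decomposable eigenvector Λ = v₁ ∧ … ∧ v_d of ⋀^d T, the span of v₁, …, v_d is a d-dimensional T-invariant subspace; and (iii) these assignments are mutually inverse bijections between the set of d-dimensional T-invariant subspaces of V and the set of projective equivalence classes (i.e., classes up to nonzero scalar multiple) of totally decomposable eigenvectors of ⋀^d T. -/

import Mathlib

/-- The exterior algebra functorial map preserves the `d`-th exterior power. -/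
theorem map_mem_exteriorPower {V : Type*} [AddCommGroup V] [Module ℝ V] (d : ℕ)
    (T : V →ₗ[ℝ] V) : ∀ x ∈ ⋀[ℝ]^d V, ExteriorAlgebra.map T x ∈ ⋀[ℝ]^d V := by
  intro x hx
  have h : Submodule.map (ExteriorAlgebra.map T).toLinearMap
      (LinearMap.range (ExteriorAlgebra.ι ℝ (M := V))) ≤
      LinearMap.range (ExteriorAlgebra.ι ℝ (M := V)) := by
    rintro y hy
    rw [Submodule.mem_map] at hy
    obtain ⟨z, hz, rfl⟩ := hy
    obtain ⟨m, rfl⟩ := hz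
    exact ⟨T m, (ExteriorAlgebra.map_apply_ι T m).symm⟩
  have h2 : Submodule.map (ExteriorAlgebra.map T).toLinearMap (⋀[ℝ]^d V) ≤ ⋀[ℝ]^d V := by
    rw [Submodule.map_pow]
    exact pow_le_pow_left' h d
  exact h2 ⟨x, hx, rfl⟩

/-- The `d`-th exterior power `⋀^d T` of an endomorphism `T` of `V`, as an endomorphism of
`⋀^d V`; it is determined by `⋀^d T (u₁ ∧ ⋯ ∧ u_d) = T u₁ ∧ ⋯ ∧ T u_d`. -/
noncomputable def exteriorPowerMap {V : Type*} [AddCommGroup V] [Module ℝ V] (d : ℕ)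
    (T : V →ₗ[ℝ] V) : ⋀[ℝ]^d V →ₗ[ℝ] ⋀[ℝ]^d V :=
  (ExteriorAlgebra.map T).toLinearMap.restrict (map_mem_exteriorPower d T)

/-- The wedge product `v₁ ∧ v₂ ∧ ⋯ ∧ v_d`, as an element of `⋀^d V`. -/
noncomputable def wedge {V : Type*} [AddCommGroup V] [Module ℝ V] (d : ℕ) (v : Fin d → V) :
    ⋀[ℝ]^d V :=
  ⟨ExteriorAlgebra.ιMulti ℝ d v, ExteriorAlgebra.ιMulti_range ℝ d (Set.mem_range_self v)⟩

/-- `Λ ∈ ⋀^d V` is a totally decomposable eigenvector of `⋀^d T`: it is the wedge product of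
`d` linearly independent vectors, and it is an eigenvector of `⋀^d T`. -/
def IsDecompEigen {V : Type*} [AddCommGroup V] [Module ℝ V] (d : ℕ) (T : Module.End ℝ V)
    (L : ⋀[ℝ]^d V) : Prop :=
  (∃ v : Fin d → V, LinearIndependent ℝ v ∧ L = wedge d v) ∧
    ∃ mu : ℝ, exteriorPowerMap d (T : V →ₗ[ℝ] V) L = mu • L

/-- Projective equivalence (equality up to a nonzero scalar multiple) on the set of totally
decomposable eigenvectors of `⋀^d T`. -/
def projSetoid {V : Type*} [AddCommGroup V] [Module ℝ V] (d : ℕ) (T : Module.End ℝ V) :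
    Setoid {L : ⋀[ℝ]^d V // IsDecompEigen d T L} where
  r L L' := ∃ c : ℝ, c ≠ 0 ∧ (L' : ⋀[ℝ]^d V) = c • (L : ⋀[ℝ]^d V)
  iseqv := by
    constructor
    · exact fun L => ⟨1, one_ne_zero, (one_smul _ _).symm⟩
    · rintro L L' ⟨c, hc, h⟩
      exact ⟨c⁻¹, inv_ne_zero hc, by rw [h, smul_smul, inv_mul_cancel₀ hc, one_smul]⟩
    · rintro L₁ L₂ L₃ ⟨c₁, hc₁, h₁⟩ ⟨c₂, hc₂, h₂⟩
      exact ⟨c₂ * c₁, mul_ne_zero hc₂ hc₁, by rw [h₂, h₁, smul_smul]⟩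

/-!
A `d`-dimensional subspace `W` with basis `v` is recovered from the line through
`Λ = v₁ ∧ ⋯ ∧ v_d` as the annihilator `{x | x ∧ Λ = 0}`, because `x ∧ v₁ ∧ ⋯ ∧ v_d` vanishes
exactly when `x` depends linearly on `v`. Conversely, another choice of `d` vectors in `W` changes
`Λ` by a determinant, so `W` determines the line through `Λ`. As `⋀^d T` sends `v₁ ∧ ⋯ ∧ v_d` to
`T v₁ ∧ ⋯ ∧ T v_d`, this line is fixed if and only if the span of the `T vᵢ` is again `W`.
-/

section CommRing

variable {R M N ι : Type*} [CommRing R] [AddCommGroup M] [Module R M] [AddCommGroup N] [Module R N]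

theorem alternatingMap_sum_smul_eq_det_smul [Fintype ι] [DecidableEq ι] (f : M [⋀^ι]→ₗ[R] N)
    (A : Matrix ι ι R) (v : ι → M) : f (fun i => ∑ j, A i j • v j) = A.det • f v := by
  suffices h : f.compLinearMap (Fintype.linearCombination R v) =
      (LinearMap.toSpanSingleton R N (f v)).compAlternatingMap Matrix.detRowAlternating from
    DFunLike.congr_fun h A
  refine Module.Basis.ext_alternating (Pi.basisFun R ι) fun s hs => ?_
  let σ : Equiv.Perm ι := Equiv.ofBijective s (Finite.injective_iff_bijective.mp hs)
  have at_basis : f.compLinearMap (Fintype.linearCombination R v) (Pi.basisFun R ι) =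
      (LinearMap.toSpanSingleton R N (f v)).compAlternatingMap Matrix.detRowAlternating
        (Pi.basisFun R ι) := by
    simp [← Pi.basisFun_det, Module.Basis.det_self]
  change f.compLinearMap _ (Pi.basisFun R ι ∘ σ) =
    LinearMap.compAlternatingMap _ _ (Pi.basisFun R ι ∘ σ)
  rw [AlternatingMap.map_perm, AlternatingMap.map_perm, at_basis]

theorem exists_ιMulti_eq_smul_of_mem_span {d : ℕ} {v w : Fin d → M}
    (hw : ∀ i, w i ∈ Submodule.span R (Set.range v)) :
    ∃ c : R, exteriorPower.ιMulti R d w = c • exteriorPower.ιMulti R d v := by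
  choose A hA using fun i => (Submodule.mem_span_range_iff_exists_fun R).mp (hw i)
  obtain rfl : (fun i => ∑ j, A i j • v j) = w := funext hA
  exact ⟨_, alternatingMap_sum_smul_eq_det_smul (exteriorPower.ιMulti R d) (Matrix.of A) v⟩

theorem exists_map_ιMulti_eq_smul_of_map_span_le {d : ℕ} {T : Module.End R M} {v : Fin d → M}
    (hT : (Submodule.span R (Set.range v)).map T ≤ Submodule.span R (Set.range v)) :
    ∃ μ : R, exteriorPower.map d T (exteriorPower.ιMulti R d v) =
      μ • exteriorPower.ιMulti R d v := by
  rw [exteriorPower.map_apply_ιMulti]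
  exact exists_ιMulti_eq_smul_of_mem_span fun i =>
    hT (Submodule.mem_map_of_mem (Submodule.subset_span (Set.mem_range_self i)))

/-- The subspace of vectors `x` with `x ∧ Λ = 0`. It recovers from a totally decomposable `Λ` the
span of its factors without choosing a decomposition. -/
def wedgeAnnihilator (L : ExteriorAlgebra R M) : Submodule R M :=
  LinearMap.ker (LinearMap.mulRight R L ∘ₗ ExteriorAlgebra.ι R)

theorem mem_wedgeAnnihilator {L : ExteriorAlgebra R M} {x : M} :
    x ∈ wedgeAnnihilator L ↔ ExteriorAlgebra.ι R x * L = 0 :=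
  Iff.rfl

theorem wedgeAnnihilator_smul {c : R} (hc : IsUnit c) (L : ExteriorAlgebra R M) :
    wedgeAnnihilator (c • L) = wedgeAnnihilator L := by
  ext x
  rw [mem_wedgeAnnihilator, mem_wedgeAnnihilator, mul_smul_comm, hc.smul_eq_zero]

end CommRing

section Field

variable {K V : Type*} [Field K] [AddCommGroup V] [Module K V] {d : ℕ} {v w : Fin d → V}

theorem ιMulti_ne_zero_iff_linearIndependent :
    exteriorPower.ιMulti K d v ≠ 0 ↔ LinearIndependent K v := by
  refine ⟨not_imp_comm.mp ((exteriorPower.ιMulti K d).map_linearDependent v), fun hv => ?_⟩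
  let univ : Set.powersetCard (Fin d) d :=
    Set.powersetCard.ofFinEmbEquiv (RelEmbedding.refl (· ≤ ·))
  have wedge_univ : exteriorPower.ιMulti_family K d v univ = exteriorPower.ιMulti K d v := by
    simp only [exteriorPower.ιMulti_family, univ, Equiv.symm_apply_apply]
    rfl
  rw [← wedge_univ]
  exact (exteriorPower.ιMulti_family_linearIndependent_field d hv).ne_zero univ

theorem wedgeAnnihilator_ιMulti (hv : LinearIndependent K v) :
    wedgeAnnihilator (exteriorPower.ιMulti K d v : ExteriorAlgebra K V) =
      Submodule.span K (Set.range v) := by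
  ext x
  have mul_ιMulti : ExteriorAlgebra.ι K x * ExteriorAlgebra.ιMulti K d v =
      exteriorPower.ιMulti K (d + 1) (Fin.cons x v) := by
    simp [ExteriorAlgebra.ιMulti_succ_apply, Matrix.vecTail, Function.comp_def]
  rw [mem_wedgeAnnihilator, exteriorPower.ιMulti_apply_coe, mul_ιMulti, ZeroMemClass.coe_eq_zero,
    ← not_iff_not, ← ne_eq, ιMulti_ne_zero_iff_linearIndependent, linearIndependent_finCons,
    and_iff_right hv]

theorem span_range_eq_iff_exists_ιMulti_eq_smul (hv : LinearIndependent K v)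
    (hw : LinearIndependent K w) :
    Submodule.span K (Set.range v) = Submodule.span K (Set.range w) ↔
      ∃ c : K, c ≠ 0 ∧ exteriorPower.ιMulti K d w = c • exteriorPower.ιMulti K d v := by
  constructor
  · intro hvw
    obtain ⟨c, hc⟩ := exists_ιMulti_eq_smul_of_mem_span (R := K) (v := v) (w := w)
      fun i => hvw ▸ Submodule.subset_span (Set.mem_range_self i)
    refine ⟨c, ?_, hc⟩
    rintro rfl
    exact ιMulti_ne_zero_iff_linearIndependent.mpr hw (by rw [hc, zero_smul])
  · rintro ⟨c, hc, hvw⟩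
    rw [← wedgeAnnihilator_ιMulti hv, ← wedgeAnnihilator_ιMulti hw, hvw, Submodule.coe_smul,
      wedgeAnnihilator_smul hc.isUnit]

theorem map_span_eq_of_map_ιMulti_eq_smul {T : Module.End K V} (hT : Function.Injective T)
    (hv : LinearIndependent K v) {μ : K}
    (hμ : exteriorPower.map d T (exteriorPower.ιMulti K d v) = μ • exteriorPower.ιMulti K d v) :
    (Submodule.span K (Set.range v)).map T = Submodule.span K (Set.range v) := by
  have hTv : LinearIndependent K (T ∘ v) := hv.map' T (LinearMap.ker_eq_bot.mpr hT)
  rw [exteriorPower.map_apply_ιMulti] at hμ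
  have hμ₀ : μ ≠ 0 := by
    rintro rfl
    exact ιMulti_ne_zero_iff_linearIndependent.mpr hTv (by rw [hμ, zero_smul])
  rw [Submodule.map_span, ← Set.range_comp]
  exact ((span_range_eq_iff_exists_ιMulti_eq_smul hv hTv).mpr ⟨μ, hμ₀, hμ⟩).symm

theorem exists_linearIndependent_span_range_eq (hd : 1 ≤ d) {W : Submodule K V}
    (hW : Module.finrank K W = d) :
    ∃ v : Fin d → V, LinearIndependent K v ∧ Submodule.span K (Set.range v) = W := by
  have : Module.Finite K W := Module.finite_of_finrank_pos (by lia)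
  let b := Module.finBasisOfFinrankEq K W hW
  refine ⟨W.subtype ∘ b, b.linearIndependent.map' W.subtype W.ker_subtype, ?_⟩
  rw [Set.range_comp, ← Submodule.map_span, b.span_eq, Submodule.map_subtype_top]

/-- `L ∈ ⋀^d V` is a totally decomposable eigenvector of `E`: a wedge product of `d` linearly
independent vectors, hence nonzero, which `E` multiplies by a scalar. -/
def IsDecomposableEigenvector (E : Module.End K (⋀[K]^d V)) (L : ⋀[K]^d V) : Prop :=
  (∃ v : Fin d → V, LinearIndependent K v ∧ L = exteriorPower.ιMulti K d v) ∧
    ∃ μ : K, E L = μ • L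

/-- Projective equivalence of totally decomposable eigenvectors of `E`. Its classes are kept as a
quotient of eigenvectors instead of points of `ℙ K (⋀[K]^d V)`. -/
def decomposableEigenvectorSetoid (E : Module.End K (⋀[K]^d V)) :
    Setoid {L : ⋀[K]^d V // IsDecomposableEigenvector E L} where
  r L L' := ∃ c : K, c ≠ 0 ∧ (L' : ⋀[K]^d V) = c • (L : ⋀[K]^d V)
  iseqv :=
    { refl := fun _ => ⟨1, one_ne_zero, (one_smul _ _).symm⟩
      symm := fun ⟨c, hc, h⟩ => ⟨c⁻¹, inv_ne_zero hc, by rw [h, inv_smul_smul₀ hc]⟩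
      trans := fun ⟨c, hc, h⟩ ⟨c', hc', h'⟩ =>
        ⟨c' * c, mul_ne_zero hc' hc, by rw [h', h, smul_smul]⟩ }

theorem isDecomposableEigenvector_ιMulti {T : Module.End K V} (hv : LinearIndependent K v)
    (hT : (Submodule.span K (Set.range v)).map T ≤ Submodule.span K (Set.range v)) :
    IsDecomposableEigenvector (exteriorPower.map d T) (exteriorPower.ιMulti K d v) :=
  ⟨⟨v, hv, rfl⟩, exists_map_ιMulti_eq_smul_of_map_span_le hT⟩

namespace IsDecomposableEigenvector

variable {T : Module.End K V} {L : ⋀[K]^d V}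

theorem finrank_wedgeAnnihilator {E : Module.End K (⋀[K]^d V)}
    (hL : IsDecomposableEigenvector E L) :
    Module.finrank K (wedgeAnnihilator (L : ExteriorAlgebra K V)) = d := by
  obtain ⟨⟨v, hv, rfl⟩, -⟩ := hL
  rw [wedgeAnnihilator_ιMulti hv, finrank_span_eq_card hv, Fintype.card_fin]

theorem map_wedgeAnnihilator_le (hT : Function.Injective T)
    (hL : IsDecomposableEigenvector (exteriorPower.map d T) L) :
    (wedgeAnnihilator (L : ExteriorAlgebra K V)).map T ≤
      wedgeAnnihilator (L : ExteriorAlgebra K V) := by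
  obtain ⟨⟨v, hv, rfl⟩, μ, hμ⟩ := hL
  rw [wedgeAnnihilator_ιMulti hv]
  exact (map_span_eq_of_map_ιMulti_eq_smul hT hv hμ).le

end IsDecomposableEigenvector

/-- The `d`-dimensional `T`-invariant subspace attached to a projective class of totally
decomposable eigenvectors of `⋀^d T`, namely the annihilator of any representative. -/
noncomputable def invariantSubspaceOfClass {T : Module.End K V} (hT : Function.Injective T) :
    Quotient (decomposableEigenvectorSetoid (exteriorPower.map d T)) →
      {W : Submodule K V // Module.finrank K W = d ∧ W.map T ≤ W} :=
  Quotient.lift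
    (fun L => ⟨wedgeAnnihilator (L.1 : ExteriorAlgebra K V),
      L.2.finrank_wedgeAnnihilator, L.2.map_wedgeAnnihilator_le hT⟩)
    fun L L' ⟨c, hc, h⟩ => Subtype.ext <| by
      change wedgeAnnihilator (L.1 : ExteriorAlgebra K V) =
        wedgeAnnihilator (L'.1 : ExteriorAlgebra K V)
      rw [h, Submodule.coe_smul, wedgeAnnihilator_smul hc.isUnit]

section Correspondence

variable {T : Module.End K V} (hT : Function.Injective T)

theorem coe_invariantSubspaceOfClass_mk
    (L : {L : ⋀[K]^d V // IsDecomposableEigenvector (exteriorPower.map d T) L})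
    (hv : LinearIndependent K v) (hL : L.1 = exteriorPower.ιMulti K d v) :
    (invariantSubspaceOfClass hT (Quotient.mk _ L)).1 = Submodule.span K (Set.range v) := by
  rw [← wedgeAnnihilator_ιMulti hv, ← hL]
  rfl

theorem invariantSubspaceOfClass_injective :
    Function.Injective (invariantSubspaceOfClass (d := d) hT) := by
  rintro ⟨L⟩ ⟨L'⟩ h
  obtain ⟨v, hv, hL⟩ := L.2.1
  obtain ⟨w, hw, hL'⟩ := L'.2.1
  have span_eq : Submodule.span K (Set.range v) = Submodule.span K (Set.range w) :=
    (coe_invariantSubspaceOfClass_mk hT L hv hL).symm.trans <|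
      (congrArg Subtype.val h).trans (coe_invariantSubspaceOfClass_mk hT L' hw hL')
  obtain ⟨c, hc, hvw⟩ := (span_range_eq_iff_exists_ιMulti_eq_smul hv hw).mp span_eq
  exact Quotient.sound ⟨c, hc, by rw [hL, hL', hvw]⟩

theorem invariantSubspaceOfClass_surjective (hd : 1 ≤ d) :
    Function.Surjective (invariantSubspaceOfClass (d := d) hT) := by
  rintro ⟨W, hWd, hW⟩
  obtain ⟨v, hv, rfl⟩ := exists_linearIndependent_span_range_eq hd hWd
  exact ⟨Quotient.mk _ ⟨_, isDecomposableEigenvector_ιMulti hv hW⟩,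
    Subtype.ext (coe_invariantSubspaceOfClass_mk hT _ hv rfl)⟩

/-- The correspondence between `d`-dimensional `T`-invariant subspaces and projective classes of
totally decomposable eigenvectors of `⋀^d T`, as the inverse of `invariantSubspaceOfClass`: only
that direction involves no choice of basis. -/
noncomputable def invariantSubspaceEquiv (hd : 1 ≤ d) :
    {W : Submodule K V // Module.finrank K W = d ∧ W.map T ≤ W} ≃
      Quotient (decomposableEigenvectorSetoid (exteriorPower.map d T)) :=
  (Equiv.ofBijective (invariantSubspaceOfClass hT)
    ⟨invariantSubspaceOfClass_injective hT, invariantSubspaceOfClass_surjective hT hd⟩).symm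

end Correspondence

theorem invariant_subspace_correspondence_general (hd : 1 ≤ d) (T : Module.End K V)
    (hT : Function.Injective T) :
    (∀ W : Submodule K V, Module.finrank K W = d → W.map T ≤ W →
      ∀ v : Fin d → V, LinearIndependent K v → Submodule.span K (Set.range v) = W →
        IsDecomposableEigenvector (exteriorPower.map d T) (exteriorPower.ιMulti K d v)) ∧
    (∀ L : ⋀[K]^d V, IsDecomposableEigenvector (exteriorPower.map d T) L →
      ∀ v : Fin d → V, LinearIndependent K v → L = exteriorPower.ιMulti K d v →
        Module.finrank K (Submodule.span K (Set.range v)) = d ∧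
          (Submodule.span K (Set.range v)).map T ≤ Submodule.span K (Set.range v)) ∧
    (∃ e : {W : Submodule K V // Module.finrank K W = d ∧ W.map T ≤ W} ≃
        Quotient (decomposableEigenvectorSetoid (exteriorPower.map d T)),
      (∀ (W : {W : Submodule K V // Module.finrank K W = d ∧ W.map T ≤ W}) (v : Fin d → V),
        LinearIndependent K v → Submodule.span K (Set.range v) = W.1 →
          ∀ h : IsDecomposableEigenvector (exteriorPower.map d T) (exteriorPower.ιMulti K d v),
            e W = Quotient.mk _ ⟨exteriorPower.ιMulti K d v, h⟩) ∧
      (∀ (L : {L : ⋀[K]^d V // IsDecomposableEigenvector (exteriorPower.map d T) L})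
        (v : Fin d → V), LinearIndependent K v → L.1 = exteriorPower.ιMulti K d v →
          (e.symm (Quotient.mk _ L)).1 = Submodule.span K (Set.range v))) := by
  refine ⟨?wedge_eigenvector, ?span_invariant, invariantSubspaceEquiv hT hd, ?apply, ?symm_apply⟩
  case wedge_eigenvector =>
    rintro _ - hW v hv rfl
    exact isDecomposableEigenvector_ιMulti hv hW
  case span_invariant =>
    rintro _ hL v hv rfl
    rw [← wedgeAnnihilator_ιMulti hv]
    exact ⟨hL.finrank_wedgeAnnihilator, hL.map_wedgeAnnihilator_le hT⟩
  case apply =>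
    intro W v hv hW h
    refine (Equiv.symm_apply_eq _).mpr (Subtype.ext ?_)
    exact hW.symm.trans (coe_invariantSubspaceOfClass_mk hT ⟨_, h⟩ hv rfl).symm
  case symm_apply =>
    exact fun L v hv hL => coe_invariantSubspaceOfClass_mk hT L hv hL

end Field

theorem exteriorPowerMap_eq_map {V : Type*} [AddCommGroup V] [Module ℝ V] (d : ℕ)
    (T : V →ₗ[ℝ] V) : exteriorPowerMap d T = exteriorPower.map d T := by
  ext v : 2
  simpa using! Subtype.ext (ExteriorAlgebra.map_apply_ιMulti T v)

/-- Let `V` be an `n`-dimensional real vector space, `T` an invertible endomorphism of `V`,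
and `1 ≤ d ≤ n`.  Then:
(i) for every `d`-dimensional `T`-invariant subspace `W` of `V`, the wedge product of any basis
of `W` is a totally decomposable eigenvector of `⋀^d T`;
(ii) for every totally decomposable eigenvector `Λ = v₁ ∧ ⋯ ∧ v_d` of `⋀^d T`, the span of
`v₁, …, v_d` is a `d`-dimensional `T`-invariant subspace;
(iii) these assignments are mutually inverse bijections between the set of `d`-dimensional
`T`-invariant subspaces of `V` and the set of projective equivalence classes of totally
decomposable eigenvectors of `⋀^d T`. -/
theorem invariant_subspace_correspondence {V : Type*} [AddCommGroup V] [Module ℝ V]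
    [FiniteDimensional ℝ V] (n d : ℕ) (hn : Module.finrank ℝ V = n)
    (hd1 : 1 ≤ d) (hdn : d ≤ n) (T : Module.End ℝ V) (hT : IsUnit T) :
    -- (i)
    (∀ W : Submodule ℝ V, Module.finrank ℝ W = d → Submodule.map T W ≤ W →
      ∀ v : Fin d → V, LinearIndependent ℝ v → Submodule.span ℝ (Set.range v) = W →
        IsDecompEigen d T (wedge d v)) ∧
    -- (ii)
    (∀ L : ⋀[ℝ]^d V, IsDecompEigen d T L → ∀ v : Fin d → V, LinearIndependent ℝ v →
      L = wedge d v →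
        Module.finrank ℝ (Submodule.span ℝ (Set.range v)) = d ∧
          Submodule.map T (Submodule.span ℝ (Set.range v)) ≤ Submodule.span ℝ (Set.range v)) ∧
    -- (iii)
    (∃ e : {W : Submodule ℝ V // Module.finrank ℝ W = d ∧ Submodule.map T W ≤ W} ≃
        Quotient (projSetoid d T),
      (∀ (W : {W : Submodule ℝ V // Module.finrank ℝ W = d ∧ Submodule.map T W ≤ W})
        (v : Fin d → V), LinearIndependent ℝ v → Submodule.span ℝ (Set.range v) = W.1 →
          ∀ h : IsDecompEigen d T (wedge d v),
            e W = Quotient.mk (projSetoid d T) ⟨wedge d v, h⟩) ∧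
      (∀ (L : {L : ⋀[ℝ]^d V // IsDecompEigen d T L}) (v : Fin d → V),
        LinearIndependent ℝ v → L.1 = wedge d v →
          (e.symm (Quotient.mk (projSetoid d T) L)).1 =
            Submodule.span ℝ (Set.range v))) := by
  have general := invariant_subspace_correspondence_general hd1 T
    ((Module.End.isUnit_iff T).mp hT).injective
  rwa [← exteriorPowerMap_eq_map] at general
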